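/- Let d ≥ 3 and n ≥ 3. Consider any d-dimensional rectilinear drawing of the complete balanced d-partite d-uniform hypergraph K_{d×n}^d, i.e., an injective map v : Fin d × Fin n → ℝ^d whose image is a set of nd points in general position in ℝ^d (no d+1 of the points lie on a common hyperplane), where for each i ∈ Fin d the set {v(i,j) : j ∈ Fin n} is the i-th part. Then the number of crossing pairs of hyperedges, i.e., the number of unordered pairs {f, g} of functions f, g : Fin d → Fin n with f(i) ≠ g(i) for every i ∈ Fin d such that the intrinsic (relative) interiors of the convex hulls of {v(i, f(i)) : i ∈ Fin d} and {v(i, g(i)) : i ∈ Fin d} have a common point, is at least n^d (n-1)^d / 6^(⌈d/2⌉ + 1). -/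

import Mathlib

/-!
Lift each vertex `v` to `(v, 1)`, so that a linear relation among lifted vertices with strictly
positive coefficients on one hyperedge and strictly negative ones on another is a common point of
the relative interiors of the two simplices. Fix three vertices in each of two distinguished parts
and two in each of the other parts. The relations among these points whose two coefficients on
every undistinguished part are opposite form a space of dimension at least three, so by the
Borsuk–Ulam theorem some nonzero one makes the median of each distinguished coefficient triple
vanish: these medians are two continuous odd functions. Such a relation has one nonnegative and one
nonpositive coefficient in each part, and general position lets us perturb it to strict signs. Thus
every choice of three vertices in each part yields a crossing; double counting over all choices
gives at least `(n (n - 1)) ^ d / (9 * 2 ^ d)` crossing pairs.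
-/

open Finset Module Topology

theorem exists_continuous_exp_eq {X : Type*} [TopologicalSpace X] [SimplyConnectedSpace X]
    [LocallyPathConnectedSpace X] {G : X → ℂ} (hG : Continuous G) (hG₀ : ∀ x, G x ≠ 0) :
    ∃ g : X → ℂ, Continuous g ∧ ∀ x, Complex.exp (g x) = G x := by
  obtain ⟨x₀⟩ : Nonempty X := inferInstance
  obtain ⟨g, ⟨-, hg⟩, -⟩ := Complex.isCoveringMapOn_exp.existsUnique_continuousMap_lifts
    ⟨G, hG⟩ (Complex.exp_log (hG₀ x₀)) hG₀
  exact ⟨g, g.continuous, congrFun hg⟩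

theorem exists_eq_zero_of_odd_on_unit_circle {G : ℂ → ℂ} (hG : Continuous G)
    (hodd : ∀ z, ‖z‖ = 1 → G (-z) = -G z) : ∃ z, G z = 0 := by
  by_contra! hG₀
  obtain ⟨g, hg, hexp⟩ := exists_continuous_exp_eq hG hG₀
  have hratio : ∀ z, ‖z‖ = 1 → Complex.exp (g (-z) - g z) = -1 := fun z hz ↦ by
    rw [Complex.exp_sub, hexp, hexp, hodd z hz, neg_div, div_self (hG₀ z)]
  -- The odd function `(g (-z) - g z).im` vanishes somewhere on the circle, and there the
  -- exponential in `hratio` is positive.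
  obtain ⟨z, hz, him⟩ : ∃ z ∈ Metric.sphere (0 : ℂ) 1, (g (-z)).im = (g z).im := by
    have hconn : IsPreconnected (Metric.sphere (0 : ℂ) 1) :=
      isPreconnected_sphere (by rw [Complex.rank_real_complex]; norm_num) 0 1
    have hL : ContinuousOn (fun z ↦ (g (-z)).im) (Metric.sphere 0 1) := by fun_prop
    have hR : ContinuousOn (fun z ↦ (g z).im) (Metric.sphere 0 1) := by fun_prop
    have h₁ : (1 : ℂ) ∈ Metric.sphere (0 : ℂ) 1 := by simp
    have h₂ : (-1 : ℂ) ∈ Metric.sphere (0 : ℂ) 1 := by simp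
    rcases le_total (g (-1)).im (g 1).im with h | h
    · exact hconn.intermediate_value₂ h₁ h₂ hL hR h (by simpa using h)
    · exact hconn.intermediate_value₂ h₂ h₁ hL hR (by simpa using h) h
  have hre := congrArg Complex.re (hratio z (by simpa using hz))
  rw [Complex.exp_re, Complex.sub_im, him, sub_self, Real.cos_zero, mul_one] at hre
  linarith [Real.exp_pos (g (-z) - g z).re, Complex.one_re, Complex.neg_re 1]

theorem exists_ne_zero_eq_zero_of_odd {F : ℂ × ℝ → ℂ} (hF : Continuous F)
    (hodd : Function.Odd F) : ∃ p, p ≠ 0 ∧ F p = 0 := by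
  have hG : Continuous fun z : ℂ ↦ F (z, max 0 (1 - ‖z‖)) := by fun_prop
  obtain ⟨z, hz⟩ := exists_eq_zero_of_odd_on_unit_circle hG fun z hz ↦ by
    simpa [hz] using hodd (z, 0)
  refine ⟨_, fun h ↦ ?_, hz⟩
  obtain ⟨rfl, h⟩ := Prod.mk_eq_zero.1 h
  simp at h

theorem exists_ne_zero_common_zero_of_odd {E : Type*} [AddCommGroup E] [Module ℝ E]
    [TopologicalSpace E] [IsTopologicalAddGroup E] [ContinuousSMul ℝ E] [FiniteDimensional ℝ E]
    (hE : 3 ≤ finrank ℝ E) {f g : E → ℝ} (hf : Continuous f) (hg : Continuous g)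
    (hf_odd : f.Odd) (hg_odd : g.Odd) : ∃ x, x ≠ 0 ∧ f x = 0 ∧ g x = 0 := by
  obtain ⟨J, hJ⟩ := (finrank_le_iff_exists_linearMap (R := ℝ) (M := ℂ × ℝ) (M' := E)).1
    (by simpa [finrank_prod] using hE)
  have hJc : Continuous J := J.continuous_of_finiteDimensional
  obtain ⟨p, hp, hzero⟩ := exists_ne_zero_eq_zero_of_odd
    (F := fun p ↦ f (J p) + g (J p) * Complex.I) (by fun_prop)
    (fun p ↦ by simp only [map_neg, hf_odd (J p), hg_odd (J p)]; push_cast; ring)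
  exact ⟨J p, (map_ne_zero_iff J hJ).2 hp, by simpa using congrArg Complex.re hzero,
    by simpa using congrArg Complex.im hzero⟩

/-- The median of three real numbers, in a form that is visibly continuous. -/
def median (c : Fin 3 → ℝ) : ℝ := max (min (c 0) (c 1)) (min (max (c 0) (c 1)) (c 2))

theorem continuous_median : Continuous median := by unfold median; fun_prop

theorem median_odd : median.Odd := fun c ↦ by
  simp only [median, Pi.neg_apply]
  grind

theorem exists_le_median_le (c : Fin 3 → ℝ) : ∃ p q r : Fin 3,
    p ≠ q ∧ r ≠ p ∧ r ≠ q ∧ c q ≤ c r ∧ c r ≤ c p ∧ median c = c r := by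
  unfold median
  rcases le_total (c 0) (c 1) with h₀₁ | h₀₁ <;> rcases le_total (c 1) (c 2) with h₁₂ | h₁₂ <;>
    rcases le_total (c 0) (c 2) with h₀₂ | h₀₂ <;>
    simp only [min_eq_left, min_eq_right, max_eq_left, max_eq_right, h₀₁, h₁₂, h₀₂] <;>
    simp [Fin.exists_fin_succ, *]

/-- The coefficient triple `c` is supported on the two indices of `p`, nonnegative at the first and
nonpositive at the second, so that these choose a vertex for each hyperedge of a crossing pair. -/
def HasSignsAt (c : Fin 3 → ℝ) (p : Fin 3 × Fin 3) : Prop :=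
  0 ≤ c p.1 ∧ c p.2 ≤ 0 ∧ ∀ j, j ≠ p.1 → j ≠ p.2 → c j = 0

theorem HasSignsAt.sum_smul {E : Type*} [AddCommGroup E] [Module ℝ E] {c : Fin 3 → ℝ}
    {p : Fin 3 × Fin 3} (hc : HasSignsAt c p) (hp : p.1 ≠ p.2) (w : Fin 3 → E) :
    ∑ j, c j • w j = c p.1 • w p.1 + c p.2 • w p.2 :=
  Fintype.sum_eq_add _ _ hp fun j hj ↦ by rw [hc.2.2 j hj.1 hj.2, zero_smul]

theorem exists_hasSignsAt_of_median_eq_zero {c : Fin 3 → ℝ} (hc : median c = 0) :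
    ∃ p : Fin 3 × Fin 3, p.1 ≠ p.2 ∧ HasSignsAt c p := by
  obtain ⟨p, q, r, hpq, hrp, hrq, hq, hp, hr⟩ := exists_le_median_le c
  rw [← hr, hc] at hq hp
  refine ⟨(p, q), hpq, hp, hq, fun j hjp hjq ↦ ?_⟩
  rw [show j = r by grind, ← hr, hc]

theorem exists_hasSignsAt_of_add_eq_zero {c : Fin 3 → ℝ} (h₀₁ : c 0 + c 1 = 0) (h₂ : c 2 = 0) :
    ∃ p ∈ ({(0, 1), (1, 0)} : Finset (Fin 3 × Fin 3)), HasSignsAt c p := by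
  rcases le_total 0 (c 0) with h | h
  · exact ⟨(0, 1), by simp, h, by simp; linarith, fun j h0 h1 ↦ by rwa [show j = 2 by grind]⟩
  · exact ⟨(1, 0), by simp, by simp; linarith, h, fun j h1 h0 ↦ by rwa [show j = 2 by grind]⟩

section AllowedPairs

variable {ι : Type*} [DecidableEq ι]

/-- The ordered pairs of distinct positions in a triple that may carry the nonnegative and the
nonpositive coefficient in part `i`: any two positions if `i` lies in the set `s` of distinguished
parts, and only the positions `0` and `1` otherwise. -/
def allowedPairs (s : Finset ι) (i : ι) : Finset (Fin 3 × Fin 3) :=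
  if i ∈ s then univ.offDiag else {(0, 1), (1, 0)}

theorem fst_ne_snd_of_mem_allowedPairs {s : Finset ι} {i : ι} {p : Fin 3 × Fin 3}
    (hp : p ∈ allowedPairs s i) : p.1 ≠ p.2 := by
  unfold allowedPairs at hp
  split_ifs at hp
  · exact (mem_offDiag.1 hp).2.2
  · revert p; decide

theorem swap_mem_allowedPairs {s : Finset ι} {i : ι} {p : Fin 3 × Fin 3}
    (hp : p ∈ allowedPairs s i) : p.swap ∈ allowedPairs s i := by
  unfold allowedPairs at hp ⊢
  split_ifs at hp ⊢ <;> revert p <;> decide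

theorem card_piFinset_allowedPairs [Fintype ι] (s : Finset ι) :
    #(Fintype.piFinset (allowedPairs s)) = 3 ^ #s * 2 ^ Fintype.card ι := by
  have hcard : ∀ i, #(allowedPairs s i) = (if i ∈ s then 3 else 1) * 2 := fun i ↦ by
    unfold allowedPairs; split_ifs <;> rfl
  simp_rw [Fintype.card_piFinset, hcard, prod_mul_distrib, Fintype.prod_ite_mem, prod_const,
    card_univ]

theorem exists_sum_smul_eq_zero_and_hasSignsAt [Fintype ι] {E : Type*} [AddCommGroup E]
    [Module ℝ E] [FiniteDimensional ℝ E] (hE : finrank ℝ E ≤ Fintype.card ι + 1)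
    {a b : ι} (hab : a ≠ b) (w : ι → Fin 3 → E) :
    ∃ C : ι → Fin 3 → ℝ, C ≠ 0 ∧ ∑ i, ∑ j, C i j • w i j = 0 ∧
      ∀ i, ∃ p ∈ allowedPairs {a, b} i, HasSignsAt (C i) p := by
  let opp : (Fin 3 → ℝ) →ₗ[ℝ] ℝ × ℝ :=
    (.proj 0 + .proj 1 : (Fin 3 → ℝ) →ₗ[ℝ] ℝ).prod (.proj 2)
  let Φ : (ι → Fin 3 → ℝ) →ₗ[ℝ] E × ({i // i ∉ ({a, b} : Finset ι)} → ℝ × ℝ) :=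
    (∑ i, Fintype.linearCombination ℝ (w i) ∘ₗ LinearMap.proj i).prod <| LinearMap.pi fun i ↦
      opp ∘ₗ LinearMap.proj i.1
  have hker : 3 ≤ finrank ℝ (LinearMap.ker Φ) := by
    have hΦ := Φ.finrank_range_add_finrank_ker
    have hrange := Submodule.finrank_le (LinearMap.range Φ)
    have hι := card_add_card_compl ({a, b} : Finset ι)
    rw [card_pair hab] at hι
    simp only [finrank_prod, finrank_pi_fintype, finrank_self, sum_const, card_univ,
      Fintype.card_fin, smul_eq_mul, Fintype.card_subtype, ← mem_compl,
      filter_univ_mem] at hΦ hrange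
    omega
  obtain ⟨⟨C, hC⟩, hC₀, ha, hb⟩ := exists_ne_zero_common_zero_of_odd hker
    (f := fun C ↦ median (C.1 a)) (g := fun C ↦ median (C.1 b))
    (continuous_median.comp ((continuous_apply a).comp continuous_subtype_val))
    (continuous_median.comp ((continuous_apply b).comp continuous_subtype_val))
    (fun C ↦ median_odd (C.1 a)) (fun C ↦ median_odd (C.1 b))
  obtain ⟨hsum, hpairs⟩ := Prod.mk_eq_zero.1 (LinearMap.mem_ker.1 hC)
  refine ⟨C, by simpa using hC₀, by simpa [Fintype.linearCombination_apply] using hsum, fun i ↦ ?_⟩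
  by_cases hi : i ∈ ({a, b} : Finset ι)
  · have hmed : median (C i) = 0 := by
      rcases mem_insert.1 hi with rfl | hi'
      exacts [ha, mem_singleton.1 hi' ▸ hb]
    simpa [allowedPairs, hi] using exists_hasSignsAt_of_median_eq_zero hmed
  · obtain ⟨h₀₁, h₂⟩ := Prod.mk_eq_zero.1 (congrFun hpairs ⟨i, hi⟩)
    rw [allowedPairs, if_neg hi]
    exact exists_hasSignsAt_of_add_eq_zero h₀₁ h₂

end AllowedPairs

section Perturbation

variable {ι K V : Type*} [Fintype ι] [AddCommGroup V]

theorem exists_sum_smul_eq_zero_of_span_image_eq_top [Field K] [Module K V] {W : ι → V}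
    {t : Finset ι} (ht : Submodule.span K (W '' t) = ⊤) (c : ι → K) :
    ∃ r : ι → K, ∑ i, r i • W i = 0 ∧ ∀ i ∉ t, r i = c i := by
  classical
  obtain ⟨l, hlt, hl⟩ := (Finsupp.mem_span_image_iff_linearCombination K).1
    (ht ▸ Submodule.mem_top : ∑ i ∈ tᶜ, c i • W i ∈ Submodule.span K (W '' t))
  have hl_off : ∀ i ∉ t, l i = 0 := fun i hi ↦
    Finsupp.notMem_support_iff.1 fun h ↦ hi (hlt h)
  refine ⟨fun i ↦ (if i ∈ tᶜ then c i else 0) - l i, ?_, fun i hi ↦ by simp [hi, hl_off i hi]⟩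
  rw [Finsupp.linearCombination_apply, Finsupp.sum_fintype _ _ fun i ↦ zero_smul K (W i)] at hl
  simp only [sub_smul, ite_smul, zero_smul, sum_sub_distrib, Fintype.sum_ite_mem, hl, sub_self]

theorem span_image_support_eq_top_of_sum_smul_eq_zero [Field K] [Module K V]
    [FiniteDimensional K V] [DecidableEq K] {W : ι → V}
    (hW : ∀ t : Finset ι, #t ≤ finrank K V → LinearIndepOn K W t) {γ : ι → K} (hγ : γ ≠ 0)
    (hsum : ∑ i, γ i • W i = 0) :
    Submodule.span K (W '' ({i | γ i ≠ 0} : Finset ι)) = ⊤ := by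
  set S : Finset ι := {i | γ i ≠ 0}
  have hS : ∑ i ∈ S, γ i • W i = 0 := by
    rw [← hsum, sum_filter_of_ne]
    exact fun i _ h h₀ ↦ h (by rw [h₀, zero_smul])
  have hcard : finrank K V ≤ #S := by
    by_contra! hlt
    refine hγ (funext fun i ↦ by_contra fun hi ↦ hi ?_)
    exact linearIndepOn_finset_iff.1 (hW S hlt.le) γ hS i (by simpa [S] using hi)
  obtain ⟨t, htS, ht⟩ := exists_subset_card_eq hcard
  have htop := (hW t ht.le).span_eq_top_of_card_eq_finrank' (by simpa using ht)
  rw [← Set.image_eq_range] at htop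
  exact top_le_iff.1 (htop ▸ Submodule.span_mono (Set.image_mono (mod_cast htS)))

theorem exists_sum_smul_eq_zero_and_forall_mul_pos [Module ℝ V] [FiniteDimensional ℝ V]
    {W : ι → V} (hW : ∀ t : Finset ι, #t ≤ finrank ℝ V → LinearIndepOn ℝ W t) {γ ε : ι → ℝ}
    (hγ : γ ≠ 0) (hsum : ∑ i, γ i • W i = 0) (hε : ∀ i, ε i ≠ 0) (hγε : ∀ i, 0 ≤ ε i * γ i) :
    ∃ γ' : ι → ℝ, ∑ i, γ' i • W i = 0 ∧ ∀ i, 0 < ε i * γ' i := by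
  obtain ⟨r, hr, hrε⟩ := exists_sum_smul_eq_zero_of_span_image_eq_top
    (span_image_support_eq_top_of_sum_smul_eq_zero hW hγ hsum) ε
  have hpos : ∀ᶠ t : ℝ in 𝓝[>] 0, ∀ i, 0 < ε i * (γ i + t * r i) := by
    refine Filter.eventually_all.2 fun i ↦ ?_
    rcases eq_or_ne (γ i) 0 with h₀ | h₀
    · filter_upwards [self_mem_nhdsWithin] with t ht
      rw [h₀, zero_add, hrε i (by simp [h₀]), mul_left_comm]
      exact mul_pos ht (mul_self_pos.2 (hε i))
    · have hlim : Filter.Tendsto (fun t ↦ ε i * (γ i + t * r i)) (𝓝 0) (𝓝 (ε i * γ i)) :=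
        Continuous.tendsto' (by fun_prop) _ _ (by simp)
      exact (hlim.eventually_const_lt ((hγε i).lt_of_ne' (mul_ne_zero (hε i) h₀))).filter_mono
        nhdsWithin_le_nhds
  obtain ⟨t, ht⟩ := hpos.exists
  refine ⟨_, ?_, ht⟩
  simp only [add_smul, mul_smul, sum_add_distrib, ← smul_sum, hsum, hr, smul_zero, add_zero]

end Perturbation

theorem exists_linearMap_apply_apply_apply_eq {K V W : Type*} [Field K] [AddCommGroup V]
    [Module K V] [AddCommGroup W] [Module K W] (L : V →ₗ[K] W) :
    ∃ R : W →ₗ[K] V, ∀ u, L (R (L u)) = L u := by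
  obtain ⟨s, hs⟩ := L.rangeRestrict.exists_rightInverse_of_surjective L.range_rangeRestrict
  obtain ⟨R, hR⟩ := s.exists_extend
  refine ⟨R, fun u ↦ ?_⟩
  have hRL : R (L u) = s (L.rangeRestrict u) := LinearMap.congr_fun hR (L.rangeRestrict u)
  rw [hRL]
  exact congrArg Subtype.val (LinearMap.congr_fun hs (L.rangeRestrict u))

section Weights

variable {ι E : Type*} [Fintype ι] [NormedAddCommGroup E] [NormedSpace ℝ E] [FiniteDimensional ℝ E]

theorem exists_continuous_weights (p : ι → E) {w : ι → ℝ} (hw : ∑ i, w i = 1) :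
    ∃ weight : E → ι → ℝ, Continuous weight ∧ weight (∑ i, w i • p i) = w ∧
      ∀ y ∈ affineSpan ℝ (Set.range p), ∑ i, weight y i = 1 ∧ ∑ i, weight y i • p i = y := by
  set x := ∑ i, w i • p i with hx
  let L := Fintype.linearCombination ℝ fun i ↦ (p i, (1 : ℝ))
  have hL : ∀ u : ι → ℝ, L u = (∑ i, u i • p i, ∑ i, u i) := fun u ↦ by
    simp [L, Fintype.linearCombination_apply, Prod.ext_iff, Prod.fst_sum, Prod.snd_sum]
  obtain ⟨R, hR⟩ := exists_linearMap_apply_apply_apply_eq L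
  have hRc : Continuous R := R.continuous_of_finiteDimensional
  refine ⟨fun y ↦ w + R (y - x, 0), by fun_prop, by simp [← Prod.zero_eq_mk], fun y hy ↦ ?_⟩
  obtain ⟨u, hu, rfl⟩ := eq_affineCombination_of_mem_affineSpan_of_fintype hy
  rw [affineCombination_eq_linear_combination _ _ _ hu]
  have hLu := hR (u - w)
  rw [map_sub, hL u, hL w, ← hx, hw, hu, Prod.mk_sub_mk, sub_self, hL] at hLu
  obtain ⟨hcomb, hsum⟩ := Prod.mk.inj hLu
  simp [add_smul, sum_add_distrib, ← hx, hw, hcomb, hsum]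

theorem centerMass_mem_intrinsicInterior_convexHull [Nonempty ι] (p : ι → E) {w : ι → ℝ}
    (hw : ∀ i, 0 < w i) :
    univ.centerMass w p ∈ intrinsicInterior ℝ (convexHull ℝ (Set.range p)) := by
  have hw_sum : 0 < ∑ i, w i := sum_pos (fun i _ ↦ hw i) univ_nonempty
  have hx_mem : univ.centerMass w p ∈ convexHull ℝ (Set.range p) :=
    centerMass_mem_convexHull _ (fun i _ ↦ (hw i).le) hw_sum fun i _ ↦ Set.mem_range_self i
  obtain ⟨weight, hcont, hweight, hcomb⟩ := exists_continuous_weights p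
    (w := fun i ↦ w i / ∑ j, w j) (by rw [← sum_div, div_self hw_sum.ne'])
  have hx : ∑ i, (w i / ∑ j, w j) • p i = univ.centerMass w p := by
    simp_rw [centerMass, smul_sum, smul_smul, div_eq_inv_mul]
  rw [hx] at hweight
  refine mem_intrinsicInterior.2 ⟨⟨_, subset_affineSpan ℝ _ hx_mem⟩, mem_interior.2
    ⟨{y | ∀ i, 0 < weight y i}, fun y hy ↦ ?_, ?_, fun i ↦ ?_⟩, rfl⟩
  · obtain ⟨hone, hsum⟩ := hcomb y (affineSpan_convexHull (𝕜 := ℝ) (Set.range p) ▸ y.2)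
    rw [Set.mem_preimage, ← hsum]
    exact (convex_convexHull ℝ (Set.range p)).sum_mem (fun i _ ↦ (hy i).le) hone
      fun i _ ↦ subset_convexHull ℝ (Set.range p) (Set.mem_range_self i)
  · simp only [Set.ofPred_forall]
    exact isOpen_iInter_of_finite fun i ↦
      isOpen_lt continuous_const ((continuous_apply i).comp (hcont.comp continuous_subtype_val))
  · rw [hweight]
    exact div_pos (hw i) hw_sum

end Weights

section GeneralPosition

variable {α E : Type*} [AddCommGroup E] [Module ℝ E]

/-- The points `v x` are in general position in `E`: any `finrank ℝ E + 1` or fewer of them are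
affinely independent. Allowing fewer points makes the notion meaningful for configurations too small
to contain `finrank ℝ E + 1` points. -/
def InGeneralPosition (v : α → E) : Prop :=
  ∀ s : Finset α, #s ≤ finrank ℝ E + 1 → AffineIndependent ℝ fun x : s ↦ v x

theorem inGeneralPosition_of_card_eq [Fintype α] {v : α → E}
    (hα : finrank ℝ E + 1 ≤ Fintype.card α)
    (hv : ∀ s : Finset α, #s = finrank ℝ E + 1 → AffineIndependent ℝ fun x : s ↦ v x) :
    InGeneralPosition v := fun s hs ↦ by
  obtain ⟨t, hst, ht⟩ := exists_superset_card_eq hs hα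
  exact (hv t ht).comp_embedding (Set.embeddingOfSubset (s : Set α) t (coe_subset.2 hst))

theorem InGeneralPosition.linearIndepOn_prodMk_one [FiniteDimensional ℝ E] {v : α → E}
    (hv : InGeneralPosition v) {t : Finset α} (ht : #t ≤ finrank ℝ (E × ℝ)) :
    LinearIndepOn ℝ (fun x ↦ (v x, (1 : ℝ))) (t : Set α) := by
  rw [finrank_prod, finrank_self] at ht
  refine linearIndepOn_finset_iff.2 fun c hc x hx ↦ ?_
  simp only [Prod.ext_iff, Prod.fst_sum, Prod.snd_sum, Prod.smul_mk, Prod.fst_zero, Prod.snd_zero,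
    smul_eq_mul, mul_one, ← sum_coe_sort t] at hc
  exact affineIndependent_iff.1 (hv t ht) univ (fun x ↦ c x) hc.2 hc.1 ⟨x, hx⟩ (mem_univ _)

end GeneralPosition

section Crossing

variable {ι κ E : Type*} [NormedAddCommGroup E] [NormedSpace ℝ E]

/-- The hyperedges `f` and `g` of the complete `ι`-partite hypergraph with vertices drawn at `v` are
crossing. A hyperedge is encoded by the function choosing its vertex `(i, f i)` in each part
`i`. -/
def IsCrossing (v : ι × κ → E) (f g : ι → κ) : Prop :=
  (∀ i, f i ≠ g i) ∧
    (intrinsicInterior ℝ (convexHull ℝ (Set.range fun i ↦ v (i, f i))) ∩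
      intrinsicInterior ℝ (convexHull ℝ (Set.range fun i ↦ v (i, g i)))).Nonempty

variable [Fintype ι] [FiniteDimensional ℝ E]

theorem isCrossing_of_sum_smul_eq_sum_smul [Nonempty ι] {v : ι × κ → E} {f g : ι → κ}
    (hfg : ∀ i, f i ≠ g i) {a b : ι → ℝ} (ha : ∀ i, 0 < a i) (hb : ∀ i, 0 < b i)
    (hsum : ∑ i, a i • (v (i, f i), (1 : ℝ)) = ∑ i, b i • (v (i, g i), (1 : ℝ))) :
    IsCrossing v f g := by
  simp only [Prod.ext_iff, Prod.fst_sum, Prod.snd_sum, Prod.smul_mk, smul_eq_mul, mul_one] at hsum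
  refine ⟨hfg, _, centerMass_mem_intrinsicInterior_convexHull (fun i ↦ v (i, f i)) ha, ?_⟩
  rw [centerMass, hsum.1, hsum.2]
  exact centerMass_mem_intrinsicInterior_convexHull (fun i ↦ v (i, g i)) hb

theorem InGeneralPosition.isCrossing_of_sum_smul_eq_zero {v : ι × κ → E}
    (hv : InGeneralPosition v) {f g : ι → κ} (hfg : ∀ i, f i ≠ g i) {a b : ι → ℝ}
    (ha : ∀ i, 0 ≤ a i) (hb : ∀ i, b i ≤ 0) (hab : ∃ i, a i ≠ 0 ∨ b i ≠ 0)
    (hsum : ∑ i, (a i • (v (i, f i), (1 : ℝ)) + b i • (v (i, g i), (1 : ℝ))) = 0) :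
    IsCrossing v f g := by
  classical
  obtain ⟨i₀, hi₀⟩ := hab
  have : Nonempty ι := ⟨i₀⟩
  let vertex : ι ⊕ ι → ι × κ := Sum.elim (fun i ↦ (i, f i)) fun i ↦ (i, g i)
  have hvertex : Function.Injective vertex :=
    Function.Injective.sumElim (fun i j h ↦ (Prod.mk.inj h).1) (fun i j h ↦ (Prod.mk.inj h).1)
      fun i j h ↦ hfg i <| by obtain ⟨rfl, h⟩ := Prod.mk.inj h; exact h
  obtain ⟨c, hc, hcε⟩ := exists_sum_smul_eq_zero_and_forall_mul_pos
    (W := (fun x ↦ (v x, (1 : ℝ))) ∘ vertex) (γ := Sum.elim a b) (ε := Sum.elim 1 (-1))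
    (fun t ht ↦ LinearIndepOn.comp_of_image (coe_image (f := vertex) ▸ hv.linearIndepOn_prodMk_one
      (card_image_le.trans ht)) hvertex.injOn)
    (fun h ↦ hi₀.elim (· (congrFun h (.inl i₀))) (· (congrFun h (.inr i₀))))
    (by rwa [Fintype.sum_sum_type, ← sum_add_distrib])
    (by simp) (by simpa using ⟨ha, hb⟩)
  refine isCrossing_of_sum_smul_eq_sum_smul hfg (a := c ∘ .inl) (b := -c ∘ .inr) ?_ ?_ ?_
  · exact fun i ↦ by simpa using hcε (.inl i)
  · exact fun i ↦ by simpa using hcε (.inr i)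
  · rw [Fintype.sum_sum_type] at hc
    simpa [vertex, ← eq_neg_iff_add_eq_zero, ← sum_neg_distrib] using hc

theorem InGeneralPosition.exists_isCrossing [DecidableEq ι] {v : ι × κ → E}
    (hv : InGeneralPosition v) (hE : finrank ℝ E ≤ Fintype.card ι) {a b : ι} (hab : a ≠ b)
    (σ : ι → Fin 3 ↪ κ) : ∃ c : ι → Fin 3 × Fin 3, (∀ i, c i ∈ allowedPairs {a, b} i) ∧
      IsCrossing v (fun i ↦ σ i (c i).1) (fun i ↦ σ i (c i).2) := by
  obtain ⟨C, hC, hsum, hsigns⟩ := exists_sum_smul_eq_zero_and_hasSignsAt (E := E × ℝ)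
    (by simpa using hE) hab fun i j ↦ (v (i, σ i j), 1)
  choose c hc hCc using hsigns
  have hne : ∀ i, (c i).1 ≠ (c i).2 := fun i ↦ fst_ne_snd_of_mem_allowedPairs (hc i)
  obtain ⟨i, hi⟩ := Function.ne_iff.1 hC
  refine ⟨c, hc, hv.isCrossing_of_sum_smul_eq_zero (fun i ↦ (σ i).injective.ne (hne i))
    (fun i ↦ (hCc i).1) (fun i ↦ (hCc i).2.1) ⟨i, ?_⟩ ?_⟩
  · contrapose! hi
    funext j
    by_cases h₁ : j = (c i).1
    · exact h₁ ▸ hi.1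
    · by_cases h₂ : j = (c i).2
      exacts [h₂ ▸ hi.2, (hCc i).2.2 j h₁ h₂]
  · simpa only [(hCc _).sum_smul (hne _)] using hsum

end Crossing

section Counting

variable {ι κ : Type*}

/-- The unordered pair of hyperedges that `c` selects from the triples `σ`: in part `i`, one takes
the vertex at the first position of `c i` and the other the vertex at the second position. -/
def chosenPair (σ : ι → Fin 3 ↪ κ) (c : ι → Fin 3 × Fin 3) : Sym2 (ι → κ) :=
  s(fun i ↦ σ i (c i).1, fun i ↦ σ i (c i).2)

theorem chosenPair_swap (σ : ι → Fin 3 ↪ κ) (c : ι → Fin 3 × Fin 3) :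
    chosenPair σ (fun i ↦ (c i).swap) = chosenPair σ c :=
  Sym2.eq_swap

variable [Fintype ι] [DecidableEq ι]

theorem two_le_card_chosenPair_mem [Nonempty ι] [DecidableEq κ] {s : Finset ι}
    {𝒜 : Finset (Sym2 (ι → κ))} {σ : ι → Fin 3 ↪ κ} {c : ι → Fin 3 × Fin 3}
    (hc : ∀ i, c i ∈ allowedPairs s i) (hσ : chosenPair σ c ∈ 𝒜) :
    2 ≤ #{x ∈ Fintype.piFinset (allowedPairs s) ×ˢ 𝒜 | chosenPair σ x.1 = x.2} := by
  obtain ⟨i⟩ := ‹Nonempty ι›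
  have hswap : c ≠ fun i ↦ (c i).swap := fun h ↦
    fst_ne_snd_of_mem_allowedPairs (hc i) (congrArg Prod.fst (congrFun h i))
  refine one_lt_card.2 ⟨(c, chosenPair σ c), ?_, (fun i ↦ (c i).swap, chosenPair σ c), ?_,
    fun h ↦ hswap (Prod.mk.inj h).1⟩
  · simpa [hσ] using hc
  · simpa [hσ, chosenPair_swap] using fun i ↦ swap_mem_allowedPairs (hc i)

variable [Fintype κ]

theorem card_embedding_apply_eq_le [DecidableEq κ] {p q : Fin 3} (hpq : p ≠ q) (x y : κ) :
    #{τ : Fin 3 ↪ κ | τ p = x ∧ τ q = y} ≤ Fintype.card κ - 2 := by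
  rcases eq_or_ne x y with rfl | hxy
  · rw [filter_eq_empty_iff.2 fun τ _ hτ ↦ hpq (τ.injective (hτ.1.trans hτ.2.symm))]
    exact Nat.zero_le _
  obtain ⟨r, hrp, hrq⟩ : ∃ r, r ≠ p ∧ r ≠ q := by revert p q; decide
  rw [← card_pair hxy, ← card_compl]
  refine card_le_card_of_injOn (· r) (fun τ hτ ↦ ?_) fun τ hτ τ' hτ' h ↦ ?_
  · obtain ⟨rfl, rfl⟩ := (mem_filter.1 hτ).2
    simp [hrp, hrq]
  · obtain ⟨hp, hq⟩ := (mem_filter.1 hτ).2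
    obtain ⟨hp', hq'⟩ := (mem_filter.1 hτ').2
    ext j
    obtain rfl | rfl | rfl : j = p ∨ j = q ∨ j = r := by grind
    exacts [hp.trans hp'.symm, hq.trans hq'.symm, h]

theorem card_apply_pair_eq_le [DecidableEq κ] {c : ι → Fin 3 × Fin 3}
    (hc : ∀ i, (c i).1 ≠ (c i).2) (f g : ι → κ) :
    #{σ : ι → Fin 3 ↪ κ | (fun i ↦ σ i (c i).1) = f ∧ (fun i ↦ σ i (c i).2) = g} ≤
      (Fintype.card κ - 2) ^ Fintype.card ι := by
  have hpi : ({σ : ι → Fin 3 ↪ κ | (fun i ↦ σ i (c i).1) = f ∧ (fun i ↦ σ i (c i).2) = g} :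
      Finset _) = Fintype.piFinset fun i ↦ {τ | τ (c i).1 = f i ∧ τ (c i).2 = g i} := by
    ext σ
    simp [funext_iff, forall_and]
  rw [hpi, Fintype.card_piFinset]
  exact prod_le_pow_card _ _ _ fun i _ ↦ card_embedding_apply_eq_le (hc i) (f i) (g i)

theorem card_chosenPair_eq_le [DecidableEq κ] {c : ι → Fin 3 × Fin 3}
    (hc : ∀ i, (c i).1 ≠ (c i).2) (P : Sym2 (ι → κ)) :
    #{σ | chosenPair σ c = P} ≤ 2 * (Fintype.card κ - 2) ^ Fintype.card ι := by
  induction P with | h f g =>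
  simp only [chosenPair, Sym2.eq_iff, filter_or, two_mul]
  exact (card_union_le _ _).trans
    (add_le_add (card_apply_pair_eq_le hc f g) (card_apply_pair_eq_le hc g f))

theorem pow_card_le_mul_card_of_forall_exists_chosenPair_mem [Nonempty ι]
    (hκ : 3 ≤ Fintype.card κ) (s : Finset ι) {𝒜 : Finset (Sym2 (ι → κ))}
    (h𝒜 : ∀ σ : ι → Fin 3 ↪ κ, ∃ c, (∀ i, c i ∈ allowedPairs s i) ∧ chosenPair σ c ∈ 𝒜) :
    (Fintype.card κ * (Fintype.card κ - 1)) ^ Fintype.card ι ≤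
      3 ^ #s * 2 ^ Fintype.card ι * #𝒜 := by
  classical
  have hcount := card_mul_le_card_mul (s := (univ : Finset (ι → Fin 3 ↪ κ)))
    (t := Fintype.piFinset (allowedPairs s) ×ˢ 𝒜) (fun σ x ↦ chosenPair σ x.1 = x.2)
    (fun σ _ ↦ let ⟨_, hc, hσ⟩ := h𝒜 σ; two_le_card_chosenPair_mem hc hσ)
    (fun x hx ↦ card_chosenPair_eq_le (fun i ↦ fst_ne_snd_of_mem_allowedPairs
      (Fintype.mem_piFinset.1 (mem_product.1 hx).1 i)) x.2)
  rw [card_product, card_piFinset_allowedPairs, card_univ, Fintype.card_fun,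
    Fintype.card_embedding_eq, Fintype.card_fin] at hcount
  have hdesc : (Fintype.card κ).descFactorial 3 =
      Fintype.card κ * (Fintype.card κ - 1) * (Fintype.card κ - 2) := by
    simp [Nat.descFactorial_succ]; ring
  rw [hdesc, mul_pow] at hcount
  have hpos : 0 < 2 * (Fintype.card κ - 2) ^ Fintype.card ι := by
    have : 0 < Fintype.card κ - 2 := by omega
    positivity
  exact Nat.le_of_mul_le_mul_right (by linarith) hpos

end Counting

section LowerBound

variable {ι κ E : Type*} [NormedAddCommGroup E] [NormedSpace ℝ E]

/-- The unordered pairs of crossing hyperedges of the drawing `v`. -/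
def crossingPairs (v : ι × κ → E) : Set (Sym2 (ι → κ)) :=
  {P | ∃ f g, P = s(f, g) ∧ IsCrossing v f g}

variable [Fintype ι] [Fintype κ] [FiniteDimensional ℝ E]

theorem crossing_lower_bound_tverberg_general (hι : 2 ≤ Fintype.card ι)
    (hκ : 3 ≤ Fintype.card κ) (hE : finrank ℝ E ≤ Fintype.card ι) {v : ι × κ → E}
    (hv : InGeneralPosition v) :
    (Fintype.card κ * (Fintype.card κ - 1) : ℝ) ^ Fintype.card ι / (9 * 2 ^ Fintype.card ι) ≤
      (crossingPairs v).ncard := by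
  classical
  obtain ⟨a, b, hab⟩ := Fintype.one_lt_card_iff.1 hι
  have : Nonempty ι := ⟨a⟩
  have hcount := pow_card_le_mul_card_of_forall_exists_chosenPair_mem hκ {a, b}
    (𝒜 := (crossingPairs v).toFinset) fun σ ↦ by
      obtain ⟨c, hc, hcross⟩ := hv.exists_isCrossing hE hab σ
      exact ⟨c, hc, Set.mem_toFinset.2 ⟨_, _, rfl, hcross⟩⟩
  rw [card_pair hab, ← Set.ncard_eq_toFinset_card'] at hcount
  rw [div_le_iff₀' (by positivity), ← Nat.cast_pred (by omega)]
  exact_mod_cast hcount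

theorem nine_mul_two_pow_le {d : ℕ} (hd : 2 ≤ d) : 9 * 2 ^ d ≤ 6 ^ ((d + 1) / 2 + 1) := by
  obtain ⟨k, hk⟩ : ∃ k, (d + 1) / 2 = k + 1 := ⟨(d + 1) / 2 - 1, by omega⟩
  calc 9 * 2 ^ d ≤ 9 * 2 ^ (2 * (k + 1)) := by gcongr <;> omega
    _ = 36 * 4 ^ k := by rw [pow_mul]; ring
    _ ≤ 36 * 6 ^ k := by gcongr; norm_num
    _ = 6 ^ ((d + 1) / 2 + 1) := by rw [hk]; ring

end LowerBound

/-- Every `d`-dimensional rectilinear drawing of the complete balanced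
`d`-partite `d`-uniform hypergraph `K_{d×n}^d` (vertices in general position in `ℝ^d`,
with the `i`-th part `{v (i, j) : j}`) has at least `n^d (n-1)^d / 6^(⌈d/2⌉+1)` crossing
pairs of hyperedges, for `d ≥ 3` and `n ≥ 3`. -/
theorem crossing_lower_bound_tverberg (d n : ℕ) (hd : 3 ≤ d) (hn : 3 ≤ n)
    (v : Fin d × Fin n → EuclideanSpace ℝ (Fin d))
    (hinj : Function.Injective v)
    (hgen : ∀ s : Finset (Fin d × Fin n), s.card = d + 1 →
      AffineIndependent ℝ (fun i : s => v i.1)) :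
    (n : ℝ) ^ d * ((n : ℝ) - 1) ^ d / 6 ^ ((d + 1) / 2 + 1) ≤
      ({P : Sym2 (Fin d → Fin n) | ∃ f g : Fin d → Fin n,
          P = s(f, g) ∧ (∀ i : Fin d, f i ≠ g i) ∧
          (intrinsicInterior ℝ (convexHull ℝ (Set.range fun i : Fin d => v (i, f i))) ∩
           intrinsicInterior ℝ (convexHull ℝ (Set.range fun i : Fin d => v (i, g i)))).Nonempty} :
        Set (Sym2 (Fin d → Fin n))).ncard := by
  have hv : InGeneralPosition v :=
    inGeneralPosition_of_card_eq (by simp; nlinarith) (by simpa using hgen)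
  have hbound := crossing_lower_bound_tverberg_general (by simp; omega) (by simpa) (by simp) hv
  rw [Fintype.card_fin, Fintype.card_fin, mul_pow] at hbound
  refine le_trans ?_ hbound
  have hn_one : (1 : ℝ) ≤ n := mod_cast (by omega : 1 ≤ n)
  gcongr
  exact_mod_cast nine_mul_two_pow_le (by omega)
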